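/- The polynomial f = y^d + x^k z^{d-k} in ℂ[x,y,z] is irreducible if and only if gcd(k, d) = 1, for integers 1 ≤ k < d. -/

import Mathlib

open MvPolynomial

lemma aux_coeff {K : Type*} [Field K] [IsAlgClosed K] (d : ℕ) (c : K) (g : Polynomial K)
    (hg : g.Monic) (h : g ∣ Polynomial.X ^ d + Polynomial.C c) :
    ((-1) ^ g.natDegree * g.coeff 0) ^ d = (-c) ^ g.natDegree := by
  have hs : g.Splits := IsAlgClosed.splits g
  have h0 := hs.coeff_zero_eq_prod_roots_of_monic hg
  have hcard : g.roots.card = g.natDegree := hs.natDegree_eq_card_roots.symm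
  have hr : ∀ x ∈ g.roots, x ^ d = -c := by
    intro x hx
    have hx' : g.IsRoot x := (Polynomial.mem_roots'.1 hx).2
    have h2 := hx'.dvd h
    simp only [Polynomial.IsRoot.def, Polynomial.eval_add, Polynomial.eval_pow,
      Polynomial.eval_X, Polynomial.eval_C] at h2
    exact eq_neg_of_add_eq_zero_left h2
  rw [h0, ← mul_assoc, ← mul_pow, neg_one_mul, neg_neg, one_pow, one_mul, ← hcard]
  rw [← Multiset.map_id' g.roots, ← Multiset.prod_map_pow,
    Multiset.map_congr rfl hr]
  simp

lemma aux_coeff' {R : Type*} [CommRing R] [IsDomain R] (d : ℕ) (c : R) (g : Polynomial R)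
    (hg : g.Monic) (h : g ∣ Polynomial.X ^ d + Polynomial.C c) :
    ((-1) ^ g.natDegree * g.coeff 0) ^ d = (-c) ^ g.natDegree := by
  let K := AlgebraicClosure (FractionRing R)
  let φ : R →+* K := (algebraMap (FractionRing R) K).comp (algebraMap R (FractionRing R))
  have hφ : Function.Injective φ :=
    (algebraMap (FractionRing R) K).injective.comp (IsFractionRing.injective R (FractionRing R))
  have h2 := aux_coeff d (φ c) (g.map φ) (hg.map φ) (by
    simpa using Polynomial.map_dvd φ h)
  rw [hg.natDegree_map] at h2
  apply hφ
  simpa using h2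

lemma aux_main (d k : ℕ) (hk1 : 1 ≤ k) (hkd : k < d) :
    Irreducible (Polynomial.X ^ d + Polynomial.C (X 0 ^ k * X 1 ^ (d - k)) :
      Polynomial (MvPolynomial (Fin 2) ℂ)) ↔ Nat.gcd k d = 1 := by
  have hd : d ≠ 0 := by omega
  have hm := Polynomial.monic_X_pow_add_C (X 0 ^ k * X 1 ^ (d - k) : MvPolynomial (Fin 2) ℂ) hd
  have hdeg := Polynomial.natDegree_X_pow_add_C (n := d)
    (r := (X 0 ^ k * X 1 ^ (d - k) : MvPolynomial (Fin 2) ℂ))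
  constructor
  · intro hirr
    by_contra hne
    obtain ⟨p, hp, hpg⟩ := Nat.exists_prime_and_dvd hne
    obtain ⟨a, ha⟩ := hpg.trans (Nat.gcd_dvd_left k d)
    obtain ⟨b, hb⟩ := hpg.trans (Nat.gcd_dvd_right k d)
    obtain ⟨ζ, hζ⟩ := IsAlgClosed.exists_pow_nat_eq (-1 : ℂ) hp.pos
    have hb0 : b ≠ 0 := by rintro rfl; simp at hb; omega
    have hsub : d - k = p * (b - a) := by rw [Nat.mul_sub, ← ha, ← hb]
    set m : MvPolynomial (Fin 2) ℂ := C ζ * (X 0 ^ a * X 1 ^ (b - a)) with hmdef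
    have hmp : m ^ p = - (X 0 ^ k * X 1 ^ (d - k)) := by
      rw [hmdef, hsub, ha, mul_pow, ← map_pow, hζ, mul_pow, ← pow_mul, ← pow_mul,
        mul_comm a, mul_comm (b - a)]
      simp
    have hdvd : (Polynomial.X ^ b - Polynomial.C m) ∣
        (Polynomial.X ^ d + Polynomial.C (X 0 ^ k * X 1 ^ (d - k)) :
          Polynomial (MvPolynomial (Fin 2) ℂ)) := by
      have := sub_dvd_pow_sub_pow (Polynomial.X ^ b) (Polynomial.C m) p
      rw [← map_pow, hmp, ← pow_mul, mul_comm b, ← hb, map_neg, sub_neg_eq_add] at this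
      exact this
    have hqm := Polynomial.monic_X_pow_sub_C m hb0
    have hqd := Polynomial.natDegree_X_pow_sub_C (n := b) (r := m)
    obtain ⟨r, hr⟩ := hdvd
    rcases hirr.isUnit_or_isUnit hr with h | h
    · have := Polynomial.natDegree_eq_zero_of_isUnit h
      omega
    · have h3 := Polynomial.natDegree_eq_zero_of_isUnit h
      have h4 := hqm.natDegree_mul' h.ne_zero
      rw [← hr, hdeg, hqd, h3] at h4
      have := hp.two_le
      have : 2 * b ≤ p * b := Nat.mul_le_mul_right b this
      omega
  · intro hg
    have h1 : (Polynomial.X ^ d + Polynomial.C (X 0 ^ k * X 1 ^ (d - k)) :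
      Polynomial (MvPolynomial (Fin 2) ℂ)) ≠ 1 := by
      intro h
      rw [h] at hdeg
      simp at hdeg
      omega
    rw [hm.irreducible_iff_natDegree']
    refine ⟨h1, ?_⟩
    intro q g hq hgm hqg hmem
    rw [hdeg, Finset.mem_Ioc] at hmem
    have key := aux_coeff' d _ g hgm (Dvd.intro_left q hqg)
    have key2 := congrArg (fun P => (aeval ![(Polynomial.X : Polynomial ℂ), 1] P).natDegree) key
    simp only [map_pow, map_neg, map_mul, aeval_X, Polynomial.natDegree_pow] at key2
    simp only [Matrix.cons_val_zero, Matrix.cons_val_one, one_pow, mul_one,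
      Polynomial.natDegree_neg, Polynomial.natDegree_X_pow] at key2
    have h5 : d ∣ g.natDegree * k := Dvd.intro _ key2
    have h6 : d ∣ g.natDegree :=
      (Nat.Coprime.symm (show Nat.Coprime k d from hg)).dvd_of_dvd_mul_right h5
    have := Nat.le_of_dvd hmem.1 h6
    omega

theorem binomial_curve_irreducible_iff (d k : ℕ) (hk1 : 1 ≤ k) (hkd : k < d) :
    Irreducible ((X 1 ^ d + X 0 ^ k * X 2 ^ (d - k) : MvPolynomial (Fin 3) ℂ))
      ↔ Nat.gcd k d = 1 := by
  rw [← aux_main d k hk1 hkd]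
  let e := (renameEquiv ℂ (Equiv.swap (0 : Fin 3) 1)).trans (finSuccEquiv ℂ 2)
  have h : e (X 1 ^ d + X 0 ^ k * X 2 ^ (d - k)) =
      Polynomial.X ^ d + Polynomial.C (X 0 ^ k * X 1 ^ (d - k)) := by
    have e0 : e (X 0) = Polynomial.C (X 0) := by
      simp only [e, AlgEquiv.trans_apply, renameEquiv_apply, rename_X, Equiv.swap_apply_left]
      exact finSuccEquiv_X_succ (j := 0)
    have e1 : e (X 1) = Polynomial.X := by
      simp only [e, AlgEquiv.trans_apply, renameEquiv_apply, rename_X, Equiv.swap_apply_right]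
      exact finSuccEquiv_X_zero
    have e2 : e (X 2) = Polynomial.C (X 1) := by
      have : Equiv.swap (0 : Fin 3) 1 2 = 2 := by decide
      simp only [e, AlgEquiv.trans_apply, renameEquiv_apply, rename_X, this]
      exact finSuccEquiv_X_succ (j := 1)
    simp only [map_add, map_mul, map_pow, e0, e1, e2]
  rw [← h]
  exact (MulEquiv.irreducible_iff e).symm
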